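/- For every real ε > 0 and every integer k ≥ 1 there exists a constant C (depending only on ε and k) such that: for every finite undirected unweighted simple graph G on n vertices there is a subgraph H ⊆ G with at most C · n^(1 + 10kε + 1/(2^(k+1) − 1)) edges such that for every pair of vertices u, v connected in G, dist_H(u,v) ≤ dist_G(u,v) + 2^(30k/ε) · (dist_G(u,v))^(1 − 1/k). -/

import Mathlib

namespace SAS

/-- `Near G L u v`: there is a walk of length at most `L` from `u` to `v` in `G`. -/
def Near {V : Type} (G : SimpleGraph V) (L : ℕ) (u v : V) : Prop :=
  ∃ p : G.Walk u v, p.length ≤ L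

/-- The graph spanned by a finite set of edges. -/
def gr {V : Type} (A : Finset (Sym2 V)) : SimpleGraph V :=
  SimpleGraph.fromEdgeSet (A : Set (Sym2 V))

theorem Near.refl {V : Type} (G : SimpleGraph V) (L : ℕ) (u : V) : Near G L u u :=
  ⟨SimpleGraph.Walk.nil, by simp⟩

theorem Near.symm {V : Type} {G : SimpleGraph V} {L : ℕ} {u v : V} (h : Near G L u v) :
    Near G L v u := by
  obtain ⟨p, hp⟩ := h
  exact ⟨p.reverse, by simpa using hp⟩

theorem Near.trans {V : Type} {G : SimpleGraph V} {L L' : ℕ} {u v w : V} (h : Near G L u v)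
    (h' : Near G L' v w) : Near G (L + L') u w := by
  obtain ⟨p, hp⟩ := h
  obtain ⟨q, hq⟩ := h'
  exact ⟨p.append q, by rw [SimpleGraph.Walk.length_append]; omega⟩

theorem Near.le {V : Type} {G : SimpleGraph V} {L L' : ℕ} {u v : V} (h : Near G L u v)
    (h' : L ≤ L') : Near G L' u v := by
  obtain ⟨p, hp⟩ := h
  exact ⟨p, hp.trans h'⟩

theorem Near.mono {V : Type} {G G' : SimpleGraph V} {L : ℕ} {u v : V} (h : Near G L u v)
    (h' : G ≤ G') : Near G' L u v := by
  obtain ⟨p, hp⟩ := h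
  exact ⟨p.mapLe h', by simpa using hp⟩

theorem gr_mono {V : Type} {A B : Finset (Sym2 V)} (h : A ⊆ B) : gr A ≤ gr B :=
  SimpleGraph.fromEdgeSet_mono (by exact_mod_cast h)

theorem gr_le {V : Type} {A : Finset (Sym2 V)} {G : SimpleGraph V}
    (h : (A : Set (Sym2 V)) ⊆ G.edgeSet) : gr A ≤ G := by
  intro x y hxy
  rw [gr, SimpleGraph.fromEdgeSet_adj] at hxy
  exact h hxy.1

theorem Near.adj {V : Type} {G : SimpleGraph V} {u v : V} (h : G.Adj u v) : Near G 1 u v :=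
  ⟨h.toWalk, by simp⟩

open Classical in
/-- closed ball -/
noncomputable def ball {V : Type} [Fintype V] (G : SimpleGraph V) (L : ℕ) (x : V) : Finset V :=
  Finset.univ.filter (fun y => Near G L x y)

theorem mem_ball {V : Type} [Fintype V] {G : SimpleGraph V} {L : ℕ} {x y : V} :
    y ∈ ball G L x ↔ Near G L x y := by simp [ball]

open Classical in
/-- Repeated rerouting along a sequence of points. -/
theorem descend {V : Type} (E : Set (Sym2 V)) (A : Finset (Sym2 V))
    (p : ℕ → V) (pos : ℕ → ℕ) (hpos : Monotone pos) (m e K t : ℕ) (w : ℕ → ℝ) (q W N : ℝ)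
    (hw : ∀ j, 0 ≤ w j) (hq : 0 ≤ q) (hW : 0 ≤ W) (hN : 1 ≤ N)
    (F : ℕ → Finset (Sym2 V)) (hFE : ∀ j < m, (F j : Set (Sym2 V)) ⊆ E)
    (hF : ∀ j < m, ((F j).card : ℝ) ≤ q * w j)
    (hnear : ∀ j < m, Near (gr (A ∪ F j)) (pos (j+1) - pos j + e) (p j) (p (j+1)))
    (hstep : ∀ j < m, Near (gr A) t (p j) (p (j+1)))
    (hgood : ∀ a a' b b' T, a ≤ a' → a' < b → a ≤ b' → b' < b → b ≤ m → W ≤ T →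
      T < ∑ j ∈ Finset.Ico a (a'+1), w j → T < ∑ j ∈ Finset.Ico b' b, w j →
      ∑ j ∈ Finset.Ico a b, w j ≤ N * T →
      ∃ j l, a ≤ j ∧ j ≤ a' ∧ b' ≤ l ∧ l < b ∧
        (j ≤ l → Near (gr A) (pos l - pos j + K) (p j) (p l))) :
    ∀ (M a b : ℕ), a ≤ b → b ≤ m → ∑ j ∈ Finset.Ico a b, w j ≤ N ^ M * W →
      ∃ S : Finset (Sym2 V), (S : Set (Sym2 V)) ⊆ E ∧ (S.card : ℝ) ≤ 2 ^ M * (q * W) ∧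
        Near (gr (A ∪ S)) (pos b - pos a + (b - a) * e + (2 ^ M - 1) * (K + t)) (p a) (p b) := by
  intro M
  induction M with
  | zero =>
    intro a b hab hbm hs
    refine ⟨(Finset.Ico a b).biUnion F, ?_, ?_, ?_⟩
    · intro x hx
      simp only [Finset.coe_biUnion, Set.mem_iUnion] at hx
      obtain ⟨j, hj, hx⟩ := hx
      simp only [Finset.coe_Ico, Set.mem_Ico] at hj
      exact hFE j (by omega) hx
    · calc (((Finset.Ico a b).biUnion F).card : ℝ) ≤ ((∑ j ∈ Finset.Ico a b, (F j).card : ℕ) : ℝ) := by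
            exact_mod_cast Finset.card_biUnion_le
        _ = ∑ j ∈ Finset.Ico a b, ((F j).card : ℝ) := by push_cast; rfl
        _ ≤ ∑ j ∈ Finset.Ico a b, q * w j := by
            apply Finset.sum_le_sum
            intro j hj
            rw [Finset.mem_Ico] at hj
            exact hF j (by omega)
        _ = q * ∑ j ∈ Finset.Ico a b, w j := by rw [Finset.mul_sum]
        _ ≤ q * W := by
            apply mul_le_mul_of_nonneg_left _ hq
            simpa using hs
        _ = 2 ^ 0 * (q * W) := by simp
    · clear hs
      induction b, hab using Nat.le_induction with
      | base => exact Near.refl _ _ _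
      | succ b hab ih =>
        have h1 := ih (by omega)
        have h2 := hnear b (by omega)
        have h1' := h1.mono (gr_mono (B := A ∪ (Finset.Ico a (b+1)).biUnion F) (by
          apply Finset.union_subset_union_right
          apply Finset.biUnion_subset_biUnion_of_subset_left
          apply Finset.Ico_subset_Ico_right; omega))
        have h2' := h2.mono (gr_mono (B := A ∪ (Finset.Ico a (b+1)).biUnion F) (by
          apply Finset.union_subset_union_right
          apply Finset.subset_biUnion_of_mem
          simp; omega))
        refine (h1'.trans h2').le ?_
        have e1 : b + 1 - a = (b - a) + 1 := by omega
        have := hpos (show b ≤ b + 1 by omega)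
        have := hpos hab
        rw [e1, add_mul]
        simp only [pow_zero, Nat.sub_self, zero_mul, one_mul]
        omega
  | succ M ih =>
    intro a b hab hbm hs
    have hpm : (1:ℕ) ≤ 2 ^ M := Nat.one_le_two_pow
    have hqW : 0 ≤ q * W := mul_nonneg hq hW
    have hE2 : (2 ^ (M+1) - 1) * (K + t) = 2 * ((2 ^ M - 1) * (K + t)) + (K + t) := by
      have : 2 ^ (M+1) - 1 = 2 * (2 ^ M - 1) + 1 := by rw [pow_succ]; omega
      rw [this]; ring
    have hNM : 1 ≤ N ^ M := one_le_pow₀ hN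
    set T := N ^ M * W with hT
    have hWT : W ≤ T := by nlinarith
    by_cases hc : ∑ j ∈ Finset.Ico a b, w j ≤ T
    · obtain ⟨S, h1, h2, h3⟩ := ih a b hab hbm hc
      refine ⟨S, h1, h2.trans ?_, h3.le ?_⟩
      · apply mul_le_mul_of_nonneg_right _ hqW
        apply pow_le_pow_right₀ <;> norm_num
      · rw [hE2]; omega
    push Not at hc
    have hab' : a < b := by
      rcases hab.eq_or_lt with h | h
      · subst h; simp at hc; nlinarith
      · exact h
    have hex : ∃ a', a ≤ a' ∧ T < ∑ j ∈ Finset.Ico a (a'+1), w j :=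
      ⟨b - 1, by omega, by rw [show b - 1 + 1 = b by omega]; exact hc⟩
    let a' := Nat.find hex
    have ha' := Nat.find_spec hex
    have ha'b : a' ≤ b - 1 := Nat.find_min' hex ⟨by omega, by rw [show b - 1 + 1 = b by omega]; exact hc⟩
    have hpre : ∀ j, a ≤ j → j ≤ a' → ∑ i ∈ Finset.Ico a j, w i ≤ T := by
      intro j h1 h2
      rcases h1.eq_or_lt with h | h
      · subst h; simp; nlinarith
      · have := Nat.find_min hex (m := j - 1) (by show j - 1 < a'; omega)
        rw [show j - 1 + 1 = j by omega] at this
        by_contra hcon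
        push Not at hcon
        exact this ⟨by omega, hcon⟩
    let b' := Nat.findGreatest (fun b' => T < ∑ j ∈ Finset.Ico b' b, w j) (b-1)
    have hb' : T < ∑ j ∈ Finset.Ico b' b, w j :=
      Nat.findGreatest_spec (P := fun b' => T < ∑ j ∈ Finset.Ico b' b, w j) (m := a) (by omega) hc
    have hab'' : a ≤ b' :=
      Nat.le_findGreatest (P := fun b' => T < ∑ j ∈ Finset.Ico b' b, w j) (by omega) hc
    have hb'b : b' ≤ b - 1 := Nat.findGreatest_le _
    have hsuf : ∀ l, b' ≤ l → l < b → ∑ i ∈ Finset.Ico (l+1) b, w i ≤ T := by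
      intro l h1 h2
      by_contra hcon
      push Not at hcon
      rcases (show l + 1 ≤ b by omega).eq_or_lt with h | h
      · rw [h] at hcon; simp at hcon; nlinarith
      · have := Nat.le_findGreatest (P := fun b' => T < ∑ j ∈ Finset.Ico b' b, w j)
          (show l + 1 ≤ b - 1 by omega) hcon
        change l + 1 ≤ b' at this
        omega
    obtain ⟨j, l, haj, hja, hbl, hlb, hjl⟩ := hgood a a' b b' T ha'.1 (by omega) hab'' (by omega) hbm hWT
      ha'.2 hb' (by rw [hT, ← mul_assoc, ← pow_succ']; exact hs)
    obtain ⟨S1, h11, h12, h13⟩ := ih a j haj (by omega) (hpre j haj hja)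
    have hcard : ∀ S2 : Finset (Sym2 V), (S2.card : ℝ) ≤ 2 ^ M * (q * W) →
        ((S1 ∪ S2).card : ℝ) ≤ 2 ^ (M+1) * (q * W) := by
      intro S2 h2
      have : ((S1 ∪ S2).card : ℝ) ≤ S1.card + S2.card := by exact_mod_cast Finset.card_union_le _ _
      rw [pow_succ]; linarith
    have hpj := hpos haj
    by_cases hjl' : j ≤ l
    · have hg := hjl hjl'
      obtain ⟨S2, h21, h22, h23⟩ := ih (l+1) b (by omega) hbm (hsuf l hbl hlb)
      refine ⟨S1 ∪ S2, by push_cast; exact Set.union_subset h11 h21, hcard S2 h22, ?_⟩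
      have n1 := h13.mono (gr_mono (B := A ∪ (S1 ∪ S2)) (by intro x; simp; tauto))
      have n2 := hg.mono (gr_mono (B := A ∪ (S1 ∪ S2)) (by intro x; simp; tauto))
      have n3 := (hstep l (by omega)).mono (gr_mono (B := A ∪ (S1 ∪ S2)) (by intro x; simp; tauto))
      have n4 := h23.mono (gr_mono (B := A ∪ (S1 ∪ S2)) (by intro x; simp; tauto))
      refine (((n1.trans n2).trans n3).trans n4).le ?_
      rw [hE2]
      have o1 := hpos hjl'
      have o2 := hpos (show l ≤ l + 1 by omega)
      have o3 := hpos (show l + 1 ≤ b by omega)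
      have o4 : (j - a) * e + (b - (l+1)) * e ≤ (b - a) * e := by
        rw [← add_mul]; apply Nat.mul_le_mul_right; omega
      omega
    · obtain ⟨S2, h21, h22, h23⟩ := ih j b (by omega) hbm (by
        refine le_trans ?_ (hsuf l hbl hlb)
        apply Finset.sum_le_sum_of_subset_of_nonneg
        · apply Finset.Ico_subset_Ico_left; omega
        · intros; exact hw _)
      refine ⟨S1 ∪ S2, by push_cast; exact Set.union_subset h11 h21, hcard S2 h22, ?_⟩
      have n1 := h13.mono (gr_mono (B := A ∪ (S1 ∪ S2)) (by intro x; simp; tauto))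
      have n4 := h23.mono (gr_mono (B := A ∪ (S1 ∪ S2)) (by intro x; simp; tauto))
      refine (n1.trans n4).le ?_
      rw [hE2]
      have o3 := hpos (show j ≤ b by omega)
      have o4 : (j - a) * e + (b - j) * e ≤ (b - a) * e := by
        rw [← add_mul]; apply Nat.mul_le_mul_right; omega
      omega

end SAS
namespace SAS

theorem seq_exists {V : Type} (G : SimpleGraph V) (u v : V) (d l r : ℕ) (hl : 1 ≤ l)
    (hd : d ≤ r * l) (h : Near G d u v) :
    ∃ (p : ℕ → V) (pos : ℕ → ℕ) (m : ℕ), Monotone pos ∧ m ≤ r ∧ p 0 = u ∧ p m = v ∧ pos 0 = 0 ∧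
      pos m ≤ d ∧ (∀ i j, i ≤ j → Near G (pos j - pos i) (p i) (p j)) ∧
      (∀ i j L, i ≤ j → Near G L (p i) (p j) → pos j - pos i ≤ L) ∧
      (∀ j, pos (j+1) ≤ pos j + l) ∧ (∀ j < m, pos j = j * l) := by
  obtain ⟨w0, hw0⟩ := h
  obtain ⟨w, hw⟩ := w0.reachable.exists_walk_length_eq_dist
  have hmin : ∀ w' : G.Walk u v, w.length ≤ w'.length := fun w' => hw ▸ SimpleGraph.dist_le w'
  set d0 := w.length with hd0
  have hdd : d0 ≤ d := (hmin w0).trans hw0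
  have hmpos : Monotone (fun j => min (j * l) d0) := by
    intro i j hij
    have := Nat.mul_le_mul_right l hij
    simp only
    omega
  have hnear : ∀ s s', s ≤ s' → s' ≤ d0 → Near G (s' - s) (w.getVert s) (w.getVert s') := by
    intro s s' h h'
    refine ⟨((w.drop s).take (s' - s)).copy rfl ?_, ?_⟩
    · rw [SimpleGraph.Walk.drop_getVert]; congr 1; omega
    · simp [SimpleGraph.Walk.take_length]
  have hm1 : d0 ≤ ((d0 + l - 1) / l) * l := by
    have := Nat.div_add_mod (d0 + l - 1) l
    have := Nat.mod_lt (d0 + l - 1) (show l > 0 by omega)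
    rw [mul_comm]; omega
  have hm2 : (d0 + l - 1) / l ≤ r := by
    apply Nat.le_of_lt_succ
    rw [Nat.div_lt_iff_lt_mul (by omega), Nat.succ_mul]; omega
  refine ⟨fun j => w.getVert (min (j * l) d0), fun j => min (j * l) d0, (d0 + l - 1) / l, hmpos, hm2,
    ?_, ?_, ?_, ?_, ?_, ?_, ?_, ?_⟩
  · simp
  · simp only [min_eq_right hm1]; rw [hd0]; simp
  · simp
  · simp only; omega
  · intro i j hij
    exact hnear _ _ (hmpos hij) (min_le_right _ _)
  · intro i j L hij hL
    have h1 := hnear 0 (min (i * l) d0) (by omega) (by omega)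
    have h2 := hnear (min (j * l) d0) d0 (by omega) (by omega)
    have h3 : w.getVert d0 = v := by rw [hd0]; simp
    rw [h3] at h2
    rw [SimpleGraph.Walk.getVert_zero] at h1
    obtain ⟨w', hw'⟩ := (h1.trans hL).trans h2
    have := hmin w'
    have := hmpos hij
    simp only at this ⊢
    omega
  · intro j
    simp only [add_mul]; omega
  · intro j hj
    apply min_eq_left
    have h1 : (j + 1) * l ≤ ((d0 + l - 1) / l) * l := Nat.mul_le_mul_right l hj
    have h2 := Nat.div_mul_le_self (d0 + l - 1) l
    rw [add_mul] at h1; omega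

open Classical in
theorem overlap {V : Type} [Fintype V] (G : SimpleGraph V) (p : ℕ → V) (pos : ℕ → ℕ) (c l : ℕ)
    (hl : 1 ≤ l) (a b : ℕ)
    (hlow : ∀ i j L, i ≤ j → Near G L (p i) (p j) → pos j - pos i ≤ L)
    (hpos : ∀ j < b, pos j = j * l) :
    ∑ j ∈ Finset.Ico a b, ((ball G (c * l) (p j)).card : ℝ) ≤
      (2 * c + 1) * (((Finset.Ico a b).biUnion (fun j => ball G (c * l) (p j))).card : ℝ) := by
  set X := (Finset.Ico a b).biUnion (fun j => ball G (c * l) (p j)) with hX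
  have h1 : ∑ j ∈ Finset.Ico a b, (ball G (c * l) (p j)).card =
      ∑ x ∈ X, ((Finset.Ico a b).filter (fun j => x ∈ ball G (c * l) (p j))).card := by
    have : ∀ j ∈ Finset.Ico a b, (ball G (c * l) (p j)).card =
        (X.filter (fun x => x ∈ ball G (c * l) (p j))).card := by
      intro j hj
      congr 1
      ext x
      simp only [Finset.mem_filter, hX, Finset.mem_biUnion]
      constructor
      · intro h; exact ⟨⟨j, hj, h⟩, h⟩
      · exact fun h => h.2
    rw [Finset.sum_congr rfl this]
    simp only [Finset.card_filter]
    exact Finset.sum_comm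
  have h2 : ∀ x ∈ X, ((Finset.Ico a b).filter (fun j => x ∈ ball G (c * l) (p j))).card ≤ 2 * c + 1 := by
    intro x hx
    set S := (Finset.Ico a b).filter (fun j => x ∈ ball G (c * l) (p j)) with hS
    rcases S.eq_empty_or_nonempty with h | h
    · rw [h]; simp
    · have hsub : S ⊆ Finset.Icc (S.min' h) (S.min' h + 2 * c) := by
        intro j hj
        have h0 := S.min'_le j hj
        have hm := S.min'_mem h
        rw [hS, Finset.mem_filter, mem_ball, Finset.mem_Ico] at hj
        generalize S.min' h = j0 at *
        rw [hS, Finset.mem_filter, mem_ball, Finset.mem_Ico] at hm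
        have := hlow j0 j _ h0 (hm.2.trans hj.2.symm)
        rw [hpos j hj.1.2, hpos j0 hm.1.2, ← Nat.sub_mul, ← Nat.add_mul] at this
        have := Nat.le_of_mul_le_mul_right this (by omega)
        rw [Finset.mem_Icc]; omega
      have := Finset.card_le_card hsub
      simp only [Nat.card_Icc] at this
      omega
  have h3 := Finset.sum_le_card_nsmul X _ _ h2
  rw [← h1, smul_eq_mul, mul_comm X.card] at h3
  exact_mod_cast h3

open Classical in
/-- Level property: pairs at distance at most `l` can be joined with surplus `e` after adding
few edges. -/
def Lvl {V : Type} [Fintype V] (G : SimpleGraph V) (A : Finset (Sym2 V)) (l e R : ℕ) (q : ℝ) : Prop :=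
  ∀ u v d, d ≤ l → Near G d u v → ∃ F : Finset (Sym2 V), (F : Set (Sym2 V)) ⊆ G.edgeSet ∧
    (F.card : ℝ) ≤ q * (ball G R u).card ∧ Near (gr (A ∪ F)) (d + e) u v

/-- A pair whose distance is nearly right. -/
def Good {V : Type} (G : SimpleGraph V) (A : Finset (Sym2 V)) (K : ℕ) (x y : V) : Prop :=
  ∀ L, Near G L x y → Near (gr A) (L + K) x y

theorem Good.mono {V : Type} {G : SimpleGraph V} {A B : Finset (Sym2 V)} {K : ℕ} {x y : V}
    (h : Good G A K x y) (hAB : A ⊆ B) : Good G B K x y :=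
  fun L hL => (h L hL).mono (gr_mono hAB)

open Classical in
/-- total charge of the good pairs -/
noncomputable def charge {V : Type} [Fintype V] (G : SimpleGraph V) (R K : ℕ) (β : ℝ)
    (A : Finset (Sym2 V)) : ℝ :=
  ∑ z ∈ (Finset.univ : Finset (V × V)).filter
    (fun z => z.2 ∈ ball G R z.1 ∧ Good G A K z.1 z.2), β / (ball G R z.1).card

theorem charge_le {V : Type} [Fintype V] (G : SimpleGraph V) (R K : ℕ) (β : ℝ) (hβ : 0 ≤ β)
    (A : Finset (Sym2 V)) : charge G R K β A ≤ Fintype.card V * β := by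
  classical
  calc charge G R K β A ≤ ∑ z ∈ (Finset.univ : Finset (V × V)).filter
        (fun z => z.2 ∈ ball G R z.1), β / (ball G R z.1).card := by
        unfold charge
        apply Finset.sum_le_sum_of_subset_of_nonneg
        · intro z; simp only [Finset.mem_filter]; tauto
        · intros; positivity
    _ = ∑ x : V, ∑ y : V, if y ∈ ball G R x then β / (ball G R x).card else 0 := by
        rw [Finset.sum_filter, ← Finset.univ_product_univ, Finset.sum_product]
    _ = ∑ x : V, β := by
        apply Finset.sum_congr rfl
        intro x _
        rw [← Finset.sum_filter]
        simp only [Finset.filter_mem_eq_inter, Finset.univ_inter, Finset.sum_const, nsmul_eq_mul]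
        have : ((ball G R x).card : ℝ) ≠ 0 := by
          have : x ∈ ball G R x := mem_ball.2 (Near.refl _ _ _)
          exact_mod_cast (Finset.card_pos.2 ⟨x, this⟩).ne'
        field_simp
    _ = Fintype.card V * β := by simp

theorem exists_max {V : Type} [Fintype V] (G : SimpleGraph V) (R K : ℕ) (β : ℝ) (hβ : 0 ≤ β)
    (A : Finset (Sym2 V)) (hA : (A : Set (Sym2 V)) ⊆ G.edgeSet) :
    ∃ A' : Finset (Sym2 V), A ⊆ A' ∧ (A' : Set (Sym2 V)) ⊆ G.edgeSet ∧
      (A'.card : ℝ) ≤ A.card + charge G R K β A' ∧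
      ∀ B : Finset (Sym2 V), A' ⊆ B → (B : Set (Sym2 V)) ⊆ G.edgeSet →
        (B.card : ℝ) ≤ A.card + charge G R K β B → B = A' := by
  classical
  let P := (Finset.univ : Finset (Finset (Sym2 V))).filter (fun A' => A ⊆ A' ∧
    (A' : Set (Sym2 V)) ⊆ G.edgeSet ∧ (A'.card : ℝ) ≤ A.card + charge G R K β A')
  have hne : P.Nonempty := ⟨A, by
    simp only [P, Finset.mem_filter, Finset.mem_univ, true_and]
    refine ⟨subset_rfl, hA, ?_⟩
    have : 0 ≤ charge G R K β A := Finset.sum_nonneg (by intros; positivity)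
    linarith⟩
  obtain ⟨A', hA', hmax⟩ := Finset.exists_max_image P Finset.card hne
  simp only [P, Finset.mem_filter, Finset.mem_univ, true_and] at hA'
  refine ⟨A', hA'.1, hA'.2.1, hA'.2.2, ?_⟩
  intro B h1 h2 h3
  exact (Finset.eq_of_subset_of_card_le h1 (hmax B (by
    simp only [P, Finset.mem_filter, Finset.mem_univ, true_and]
    exact ⟨hA'.1.trans h1, h2, h3⟩))).symm

end SAS
namespace SAS

set_option maxHeartbeats 1000000 in
open Classical in
theorem step {V : Type} [Fintype V] (G : SimpleGraph V) (A : Finset (Sym2 V))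
    (hA : (A : Set (Sym2 V)) ⊆ G.edgeSet) (l e c t r M : ℕ) (hl : 1 ≤ l) (hr : 1 ≤ r)
    (q b N : ℝ) (hq : 0 < q) (hb : 0 < b) (hN : 1 ≤ N)
    (hspan : ∀ L x y, Near G L x y → Near (gr A) (t * L) x y)
    (hlvl : Lvl G A l e (c * l) q) (hNM : (2 * c + 1) * b / q ≤ N ^ M) :
    ∃ A' : Finset (Sym2 V), A ⊆ A' ∧ (A' : Set (Sym2 V)) ⊆ G.edgeSet ∧
      (A'.card : ℝ) ≤ A.card + Fintype.card V * (b * N * (2 * c + 1) ^ 2) ∧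
      Lvl G A' (r * l) (r * e + (2 ^ M - 1) * (r * e + 4 * (t * (c * l)) + 4 * (c * l) + t * l))
        ((3 * c + 2) * (r * l)) (2 ^ M * q ^ 2 / b) := by
  set R := (2 * c + 1) * (r * l) with hR
  set K := r * e + 2 * (t * (c * l)) + 2 * (c * l) with hK
  set β := b * N * (2 * c + 1) ^ 2 with hβdef
  have hβ : 0 ≤ β := by positivity
  obtain ⟨A', hAA', hA'E, hcard, hmax⟩ := exists_max G R K β hβ A hA
  refine ⟨A', hAA', hA'E, hcard.trans (by have := charge_le G R K β hβ A'; linarith), ?_⟩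
  have hspan' : ∀ L x y, Near G L x y → Near (gr A') (t * L) x y :=
    fun L x y h => (hspan L x y h).mono (gr_mono hAA')
  have hlrl : l ≤ r * l := Nat.le_mul_of_pos_left l hr
  have hcl : c * l ≤ c * (r * l) := Nat.mul_le_mul_left c hlrl
  have hR' : R = 2 * (c * (r * l)) + r * l := by rw [hR]; ring
  have hR'' : (3 * c + 2) * (r * l) = R + c * (r * l) + r * l := by rw [hR]; ring
  intro u v d hd huv
  obtain ⟨p, pos, m, hmono, hmr, hp0, hpm, hpos0, hposm, hnear, hlow, hposl, hposeq⟩ :=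
    seq_exists G u v d l r hl hd huv
  have hF : ∀ j, ∃ F : Finset (Sym2 V), (F : Set (Sym2 V)) ⊆ G.edgeSet ∧
      (F.card : ℝ) ≤ q * (ball G (c * l) (p j)).card ∧
      Near (gr (A ∪ F)) (pos (j+1) - pos j + e) (p j) (p (j+1)) := fun j =>
    hlvl (p j) (p (j+1)) (pos (j+1) - pos j) (by have := hposl j; omega) (hnear j (j+1) (by omega))
  choose F hF1 hF2 hF3 using hF
  set s : ℝ := ((ball G ((3 * c + 2) * (r * l)) u).card : ℝ) with hs
  have hs1 : 1 ≤ s := by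
    have : u ∈ ball G ((3 * c + 2) * (r * l)) u := mem_ball.2 (Near.refl _ _ _)
    rw [hs]
    exact_mod_cast Nat.succ_le_of_lt (Finset.card_pos.2 ⟨u, this⟩)
  set w : ℕ → ℝ := fun j => ((ball G (c * l) (p j)).card : ℝ) with hw
  have hposm' : ∀ j ≤ m, pos j ≤ r * l := fun j hj => (hmono hj).trans (hposm.trans hd)
  -- points near the path
  have hux : ∀ j ≤ m, ∀ x, Near G (c * l) (p j) x → Near G (r * l + c * l) u x := by
    intro j hj x hx
    have h1 := hnear 0 j (by omega)
    rw [hp0, hpos0] at h1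
    exact (h1.trans hx).le (by have := hposm' j hj; omega)
  have hball : ∀ j ≤ m, ∀ x, Near G (c * l) (p j) x →
      ball G R x ⊆ ball G ((3 * c + 2) * (r * l)) u := by
    intro j hj x hx y hy
    rw [mem_ball] at hy ⊢
    exact ((hux j hj x hx).trans hy).le (by omega)
  have hgood : ∀ a a' b₁ b' T, a ≤ a' → a' < b₁ → a ≤ b' → b' < b₁ → b₁ ≤ m → q * s / b ≤ T →
      T < ∑ j ∈ Finset.Ico a (a'+1), w j → T < ∑ j ∈ Finset.Ico b' b₁, w j →
      ∑ j ∈ Finset.Ico a b₁, w j ≤ N * T →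
      ∃ j i, a ≤ j ∧ j ≤ a' ∧ b' ≤ i ∧ i < b₁ ∧
        (j ≤ i → Near (gr A') (pos i - pos j + (K + 2 * (t * (c * l)) + 2 * (c * l))) (p j) (p i)) := by
    intro a a' b₁ b' T haa' hab hab' hbb' hbm hWT hTa hTb hTN
    have hT0 : 0 < T := lt_of_lt_of_le (by positivity) hWT
    set X := (Finset.Ico a (a'+1)).biUnion (fun j => ball G (c * l) (p j)) with hX
    set Y := (Finset.Ico b' b₁).biUnion (fun j => ball G (c * l) (p j)) with hY
    by_cases hex : ∃ x ∈ X, ∃ y ∈ Y, Good G A' K x y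
    · obtain ⟨x, hx, y, hy, hxy⟩ := hex
      simp only [hX, hY, Finset.mem_biUnion, Finset.mem_Ico, mem_ball] at hx hy
      obtain ⟨j, hj, hx⟩ := hx
      obtain ⟨i, hi, hy⟩ := hy
      refine ⟨j, i, hj.1, by omega, hi.1, hi.2, fun hji => ?_⟩
      have h1 := hxy _ ((hx.symm.trans (hnear j i hji)).trans hy)
      exact (((hspan' _ _ _ hx).trans h1).trans (hspan' _ _ _ hy.symm)).le (by omega)
    exfalso
    push Not at hex
    have hXc : T ≤ (2 * c + 1) * (X.card : ℝ) :=
      hTa.le.trans (overlap G p pos c l hl a (a'+1) hlow (fun j hj => hposeq j (by omega)))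
    have hYc : T ≤ (2 * c + 1) * (Y.card : ℝ) :=
      hTb.le.trans (overlap G p pos c l hl b' b₁ hlow (fun j hj => hposeq j (by omega)))
    set S := (Finset.Ico a b₁).biUnion F with hS
    have hBE : ((A' ∪ S : Finset (Sym2 V)) : Set (Sym2 V)) ⊆ G.edgeSet := by
      intro z hz
      simp only [Finset.coe_union, hS, Finset.coe_biUnion, Set.mem_union, Set.mem_iUnion] at hz
      rcases hz with hz | ⟨j, _, hz⟩
      · exact hA'E hz
      · exact hF1 j hz
    have hScard : (S.card : ℝ) ≤ q * (N * T) := by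
      calc (S.card : ℝ) ≤ ((∑ j ∈ Finset.Ico a b₁, (F j).card : ℕ) : ℝ) := by
            exact_mod_cast Finset.card_biUnion_le
        _ = ∑ j ∈ Finset.Ico a b₁, ((F j).card : ℝ) := by push_cast; rfl
        _ ≤ ∑ j ∈ Finset.Ico a b₁, q * w j := Finset.sum_le_sum (fun j _ => hF2 j)
        _ = q * ∑ j ∈ Finset.Ico a b₁, w j := by rw [Finset.mul_sum]
        _ ≤ q * (N * T) := mul_le_mul_of_nonneg_left hTN hq.le
    have hpath : ∀ i j, a ≤ i → i ≤ j → j < b₁ →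
        Near (gr (A' ∪ S)) (pos j - pos i + (j - i) * e) (p i) (p j) := by
      intro i j hai hij
      induction j, hij using Nat.le_induction with
      | base => intro _; exact Near.refl _ _ _
      | succ j hij ih =>
        intro hj
        have h1 := ih (by omega)
        have h2 := (hF3 j).mono (gr_mono (B := A' ∪ S) (by
          apply Finset.union_subset_union hAA'
          apply Finset.subset_biUnion_of_mem
          simp; omega))
        refine (h1.trans h2).le ?_
        have e1 : j + 1 - i = (j - i) + 1 := by omega
        have := hmono (show j ≤ j + 1 by omega)
        have := hmono hij
        rw [e1, add_mul]
        omega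
    have hpath' : ∀ i j L, a ≤ i → i < b₁ → a ≤ j → j < b₁ → Near G L (p i) (p j) →
        Near (gr (A' ∪ S)) (L + r * e) (p i) (p j) := by
      intro i j L h1 h2 h3 h4 hL
      rcases le_total i j with h | h
      · have := hlow i j L h hL
        refine (hpath i j h1 h h4).le ?_
        have : (j - i) * e ≤ r * e := Nat.mul_le_mul_right e (by omega)
        omega
      · have := hlow j i L h hL.symm
        refine (hpath j i h3 h h2).symm.le ?_
        have : (i - j) * e ≤ r * e := Nat.mul_le_mul_right e (by omega)
        omega
    have hXY : ∀ x ∈ X, ∀ y ∈ Y, Good G (A' ∪ S) K x y ∧ y ∈ ball G R x ∧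
        ball G R x ⊆ ball G ((3 * c + 2) * (r * l)) u := by
      intro x hx y hy
      simp only [hX, hY, Finset.mem_biUnion, Finset.mem_Ico, mem_ball] at hx hy
      obtain ⟨j, hj, hx⟩ := hx
      obtain ⟨i, hi, hy⟩ := hy
      refine ⟨?_, ?_, hball j (by omega) x hx⟩
      · intro L hL
        have h1 := hpath' j i _ (by omega) (by omega) (by omega) (by omega) ((hx.trans hL).trans hy.symm)
        have h2 := (hspan' _ _ _ hx).mono (gr_mono (B := A' ∪ S) Finset.subset_union_left)
        have h3 := (hspan' _ _ _ hy).mono (gr_mono (B := A' ∪ S) Finset.subset_union_left)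
        exact ((h2.symm.trans h1).trans h3).le (by omega)
      · rw [mem_ball]
        rcases le_total i j with h | h
        · exact ((hx.symm.trans (hnear i j h).symm).trans hy).le (by
            have := hposm' j (by omega); omega)
        · exact ((hx.symm.trans (hnear j i h)).trans hy).le (by
            have := hposm' i (by omega); omega)
    have hch : charge G R K β A' + (X.card : ℝ) * Y.card * (β / s) ≤ charge G R K β (A' ∪ S) := by
      have hdisj : Disjoint ((Finset.univ : Finset (V × V)).filter
          (fun z => z.2 ∈ ball G R z.1 ∧ Good G A' K z.1 z.2)) (X ×ˢ Y) := by
        rw [Finset.disjoint_left]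
        rintro ⟨x, y⟩ h1 h2
        simp only [Finset.mem_filter, Finset.mem_product] at h1 h2
        exact hex x h2.1 y h2.2 h1.2.2
      have h1 : (X.card : ℝ) * Y.card * (β / s) ≤ ∑ z ∈ X ×ˢ Y, β / (ball G R z.1).card := by
        calc (X.card : ℝ) * Y.card * (β / s) = ∑ z ∈ X ×ˢ Y, β / s := by
              simp [Finset.card_product]
          _ ≤ _ := by
              apply Finset.sum_le_sum
              rintro ⟨x, y⟩ hz
              rw [Finset.mem_product] at hz
              obtain ⟨_, h2, h3⟩ := hXY x hz.1 y hz.2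
              apply div_le_div_of_nonneg_left hβ
              · exact_mod_cast Finset.card_pos.2 ⟨y, h2⟩
              · rw [hs]; exact_mod_cast Finset.card_le_card h3
      refine le_trans (add_le_add le_rfl h1) ?_
      unfold charge
      rw [← Finset.sum_union hdisj]
      apply Finset.sum_le_sum_of_subset_of_nonneg
      · rintro ⟨x, y⟩ hz
        simp only [Finset.mem_union, Finset.mem_filter, Finset.mem_univ, true_and,
          Finset.mem_product] at hz ⊢
        rcases hz with hz | hz
        · exact ⟨hz.1, hz.2.mono Finset.subset_union_left⟩
        · exact ⟨(hXY x hz.1 y hz.2).2.1, (hXY x hz.1 y hz.2).1⟩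
      · intros; positivity
    have hgain : q * (N * T) ≤ (X.card : ℝ) * Y.card * (β / s) := by
      have hTT : T * T ≤ ((2 * c + 1) * (X.card : ℝ)) * ((2 * c + 1) * (Y.card : ℝ)) :=
        mul_le_mul hXc hYc hT0.le (by positivity)
      have h2 : (X.card : ℝ) * Y.card * (β / s) =
          (((2 * c + 1) * (X.card : ℝ)) * ((2 * c + 1) * (Y.card : ℝ))) * (b * N / s) := by
        rw [hβdef]; ring
      rw [h2]
      have hs0 : 0 < s := by linarith
      calc q * (N * T) = (q * s / b) * T * (b * N / s) := by field_simp
        _ ≤ T * T * (b * N / s) := by gcongr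
        _ ≤ _ := by gcongr
    have hBeq := hmax (A' ∪ S) Finset.subset_union_left hBE (by
      have : ((A' ∪ S).card : ℝ) ≤ A'.card + S.card := by exact_mod_cast Finset.card_union_le _ _
      linarith)
    have hXne : X.Nonempty := by
      rw [Finset.nonempty_iff_ne_empty]; intro h
      rw [h] at hXc; simp at hXc; linarith
    have hYne : Y.Nonempty := by
      rw [Finset.nonempty_iff_ne_empty]; intro h
      rw [h] at hYc; simp at hYc; linarith
    obtain ⟨x, hx⟩ := hXne
    obtain ⟨y, hy⟩ := hYne
    have := (hXY x hx y hy).1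
    rw [hBeq] at this
    exact hex x hx y hy this
  have htot : ∑ j ∈ Finset.Ico 0 m, w j ≤ N ^ M * (q * s / b) := by
    have h1 := overlap G p pos c l hl 0 m hlow hposeq
    have h2 : (((Finset.Ico 0 m).biUnion (fun j => ball G (c * l) (p j))).card : ℝ) ≤ s := by
      rw [hs]
      norm_cast
      apply Finset.card_le_card
      intro x hx
      simp only [Finset.mem_biUnion, Finset.mem_Ico, mem_ball] at hx
      obtain ⟨j, hj, hx⟩ := hx
      exact hball j (by omega) x hx (mem_ball.2 (Near.refl _ _ _))
    calc ∑ j ∈ Finset.Ico 0 m, w j ≤ (2 * c + 1) * s := h1.trans (by gcongr)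
      _ = ((2 * c + 1) * b / q) * (q * s / b) := by field_simp
      _ ≤ N ^ M * (q * s / b) := by gcongr
  obtain ⟨S, hS1, hS2, hS3⟩ := descend G.edgeSet A' p pos hmono m e
    (K + 2 * (t * (c * l)) + 2 * (c * l)) (t * l) w q (q * s / b) N (fun j => by positivity) hq.le
    (by positivity) hN F (fun j _ => hF1 j) (fun j _ => hF2 j)
    (fun j _ => (hF3 j).mono (gr_mono (Finset.union_subset_union_left hAA')))
    (fun j _ => hspan' _ _ _ ((hnear j (j+1) (by omega)).le (by have := hposl j; omega)))
    hgood M 0 m (by omega) le_rfl htot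
  refine ⟨S, hS1, hS2.trans (le_of_eq (by ring)), ?_⟩
  rw [hp0, hpm, hpos0] at hS3
  convert hS3.le ?_
  have h1 : (m - 0) * e ≤ r * e := Nat.mul_le_mul_right e (by omega)
  have h2 : K + 2 * (t * (c * l)) + 2 * (c * l) + t * l =
    r * e + 4 * (t * (c * l)) + 4 * (c * l) + t * l := by omega
  rw [h2]
  omega

end SAS
namespace SAS

open Classical in
theorem bfs {V : Type} [Fintype V] (G : SimpleGraph V) (v : V) (R : ℕ) :
    ∃ T : Finset (Sym2 V), (T : Set (Sym2 V)) ⊆ G.edgeSet ∧ T.card ≤ (ball G R v).card ∧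
      ∀ x ∈ ball G R v, Near (gr T) R v x := by
  induction R with
  | zero =>
    refine ⟨∅, by simp, by simp, ?_⟩
    intro x hx
    obtain ⟨p, hp⟩ := mem_ball.1 hx
    have : v = x := SimpleGraph.Walk.eq_of_length_eq_zero (by omega : p.length = 0)
    subst this
    exact Near.refl _ _ _
  | succ R ih =>
    obtain ⟨T, hT, hc, hn⟩ := ih
    have hpar : ∀ x, ∃ y, x ∈ ball G (R+1) v \ ball G R v → y ∈ ball G R v ∧ G.Adj x y := by
      intro x
      by_cases hx : x ∈ ball G (R+1) v \ ball G R v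
      · rw [Finset.mem_sdiff, mem_ball, mem_ball] at hx
        obtain ⟨⟨p, hp⟩, h2⟩ := hx
        have hp' : p.reverse.length ≤ R + 1 := by simpa using hp
        revert hp'
        cases hpr : p.reverse with
        | nil => exact absurd (Near.refl _ _ _) h2
        | cons hadj p' =>
          intro hp'
          rename_i y
          refine ⟨y, fun _ => ⟨mem_ball.2 (Near.symm ⟨p', ?_⟩), hadj⟩⟩
          simp at hp'; exact hp'
      · exact ⟨x, fun h => absurd h hx⟩
    choose y hy using hpar
    have hsub : ball G R v ⊆ ball G (R+1) v := fun x hx =>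
      mem_ball.2 ((mem_ball.1 hx).le (by omega))
    refine ⟨T ∪ (ball G (R+1) v \ ball G R v).image (fun x => s(x, y x)), ?_, ?_, ?_⟩
    · intro z hz
      simp only [Finset.coe_union, Finset.coe_image, Set.mem_union, Set.mem_image,
        Finset.mem_coe] at hz
      rcases hz with hz | ⟨x, hx, rfl⟩
      · exact hT hz
      · exact (hy x hx).2
    · refine (Finset.card_union_le _ _).trans ?_
      have h1 := Finset.card_image_le (s := ball G (R+1) v \ ball G R v) (f := fun x => s(x, y x))
      have h2 := Finset.card_sdiff_add_card_eq_card hsub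
      omega
    · intro x hx
      by_cases hx' : x ∈ ball G R v
      · exact ((hn x hx').mono (gr_mono Finset.subset_union_left)).le (by omega)
      · have hxd : x ∈ ball G (R+1) v \ ball G R v := Finset.mem_sdiff.2 ⟨hx, hx'⟩
        obtain ⟨h1, h2⟩ := hy x hxd
        refine ((hn _ h1).mono (gr_mono Finset.subset_union_left)).trans (Near.adj ?_)
        rw [gr, SimpleGraph.fromEdgeSet_adj]
        refine ⟨?_, h2.ne'⟩
        rw [Sym2.eq_swap]
        simp only [Finset.coe_union, Finset.coe_image, Set.mem_union, Set.mem_image,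
          Finset.mem_coe]
        exact Or.inr ⟨x, hxd, rfl⟩

open Classical in
theorem spanner_aux {V : Type} [Fintype V] (κ : ℕ) (hκ : 1 ≤ κ) (N : ℝ) (hN : 1 ≤ N)
    (hn : (Fintype.card V : ℝ) ≤ N ^ κ) (S : Finset V) :
    ∀ G : SimpleGraph V, (∀ x y, G.Adj x y → x ∈ S) →
    ∃ A : Finset (Sym2 V), (A : Set (Sym2 V)) ⊆ G.edgeSet ∧ (A.card : ℝ) ≤ N * S.card ∧
      ∀ x y, G.Adj x y → Near (gr A) (2 * κ) x y := by
  induction S using Finset.strongInduction with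
  | H S ih =>
  intro G hG
  rcases S.eq_empty_or_nonempty with hS | ⟨v, hv⟩
  · subst hS
    exact ⟨∅, by simp, by simp, fun x y h => absurd (hG x y h) (by simp)⟩
  have hj : ∃ j < κ, ((ball G (j+1) v).card : ℝ) ≤ N * (ball G j v).card := by
    by_contra hcon
    push Not at hcon
    have h1 : ∀ j < κ, N ^ j ≤ (ball G j v).card := by
      intro j
      induction j with
      | zero =>
        intro _
        have : v ∈ ball G 0 v := mem_ball.2 (Near.refl _ _ _)
        have := Finset.card_pos.2 ⟨v, this⟩
        simp only [pow_zero]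
        exact_mod_cast this
      | succ j ihj =>
        intro hj
        have h2 := ihj (by omega)
        have h3 := hcon j (by omega)
        rw [pow_succ']
        have : N * N ^ j ≤ N * (ball G j v).card := by gcongr
        linarith
    have h2 := h1 (κ - 1) (by omega)
    have h3 := hcon (κ - 1) (by omega)
    have h4 : N * N ^ (κ - 1) ≤ N * (ball G (κ - 1) v).card := by gcongr
    rw [← pow_succ', show κ - 1 + 1 = κ by omega] at h4
    rw [show κ - 1 + 1 = κ by omega] at h3
    have h5 : ((ball G κ v).card : ℝ) ≤ Fintype.card V := by exact_mod_cast Finset.card_le_univ _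
    linarith
  obtain ⟨j, hjκ, hj⟩ := hj
  set B := ball G j v with hB
  have hBS : B ⊆ S := by
    intro x hx
    obtain ⟨p, hp⟩ := (mem_ball.1 hx).symm
    cases p with
    | nil => exact hv
    | cons h _ => exact hG _ _ h
  have hvB : v ∈ B := mem_ball.2 (Near.refl _ _ _)
  let G' : SimpleGraph V :=
    { Adj := fun x y => G.Adj x y ∧ x ∉ B ∧ y ∉ B
      symm := ⟨fun x y h => ⟨h.1.symm, h.2.2, h.2.1⟩⟩
      loopless := ⟨fun x h => G.loopless.irrefl x h.1⟩ }
  have hG' : G' ≤ G := fun x y h => h.1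
  obtain ⟨A, hA1, hA2, hA3⟩ := ih (S \ B) (Finset.sdiff_ssubset hBS ⟨v, hvB⟩) G'
    (fun x y h => Finset.mem_sdiff.2 ⟨hG x y h.1, h.2.1⟩)
  obtain ⟨T, hT1, hT2, hT3⟩ := bfs G v (j+1)
  have key : ∀ x y, G.Adj x y → x ∈ B → Near (gr (A ∪ T)) (2 * κ) x y := by
    intro x y hxy hx
    have h1 := hT3 x (mem_ball.2 ((mem_ball.1 hx).le (by omega)))
    have h2 := hT3 y (mem_ball.2 ((mem_ball.1 hx).trans (Near.adj hxy)))
    exact ((h1.symm.trans h2).mono (gr_mono Finset.subset_union_right)).le (by omega)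
  refine ⟨A ∪ T, ?_, ?_, ?_⟩
  · push_cast
    exact Set.union_subset (hA1.trans (SimpleGraph.edgeSet_mono hG')) hT1
  · have h1 : ((A ∪ T).card : ℝ) ≤ A.card + T.card := by exact_mod_cast Finset.card_union_le _ _
    have h2 : ((S \ B).card : ℝ) + B.card = S.card := by
      exact_mod_cast Finset.card_sdiff_add_card_eq_card hBS
    have h3 : (T.card : ℝ) ≤ (ball G (j+1) v).card := by exact_mod_cast hT2
    rw [← h2, mul_add]
    linarith
  · intro x y hxy
    by_cases hx : x ∈ B
    · exact key x y hxy hx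
    by_cases hy : y ∈ B
    · exact (key y x hxy.symm hy).symm
    exact (hA3 x y ⟨hxy, hx, hy⟩).mono (gr_mono Finset.subset_union_left)

theorem near_of_adj {V : Type} (G H : SimpleGraph V) (t : ℕ)
    (h : ∀ x y, G.Adj x y → Near H t x y) (L : ℕ) (x y : V) (hL : Near G L x y) :
    Near H (t * L) x y := by
  obtain ⟨p, hp⟩ := hL
  refine Near.le (L := t * p.length) ?_ (Nat.mul_le_mul_left t hp)
  clear hp
  induction p with
  | nil => exact Near.refl _ _ _
  | cons hadj p ih =>
    exact ((h _ _ hadj).trans ih).le (by simp; ring_nf; rfl)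

open Classical in
theorem level_zero {V : Type} [Fintype V] (G : SimpleGraph V) (κ : ℕ) (hκ : 1 ≤ κ) (N b : ℝ)
    (hN : 1 ≤ N) (hb : 0 < b) (hn : (Fintype.card V : ℝ) ≤ N ^ κ) :
    ∃ A : Finset (Sym2 V), (A : Set (Sym2 V)) ⊆ G.edgeSet ∧
      (A.card : ℝ) ≤ Fintype.card V * (b + N) ∧
      (∀ L x y, Near G L x y → Near (gr A) (2 * κ * L) x y) ∧ Lvl G A 1 0 1 (1 / b) := by
  obtain ⟨A, hA1, hA2, hA3⟩ := spanner_aux κ hκ N hN hn Finset.univ G (by simp)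
  set B := ((Finset.univ : Finset V).filter (fun x => ((ball G 1 x).card : ℝ) ≤ b)).biUnion
    (fun x => ((ball G 1 x).filter (fun y => G.Adj x y)).image (fun y => s(x, y))) with hB
  have hBE : (B : Set (Sym2 V)) ⊆ G.edgeSet := by
    intro z hz
    rw [Finset.mem_coe, hB] at hz
    simp only [Finset.mem_biUnion, Finset.mem_filter, Finset.mem_image] at hz
    obtain ⟨x, _, y, hy, rfl⟩ := hz
    exact hy.2
  have hBc : (B.card : ℝ) ≤ Fintype.card V * b := by
    calc (B.card : ℝ) ≤ ((∑ x ∈ (Finset.univ : Finset V).filter (fun x => ((ball G 1 x).card : ℝ) ≤ b),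
          (((ball G 1 x).filter (fun y => G.Adj x y)).image (fun y => s(x, y))).card : ℕ) : ℝ) := by
          exact_mod_cast Finset.card_biUnion_le
      _ ≤ ∑ x ∈ (Finset.univ : Finset V).filter (fun x => ((ball G 1 x).card : ℝ) ≤ b), b := by
          push_cast
          apply Finset.sum_le_sum
          intro x hx
          refine le_trans ?_ (Finset.mem_filter.1 hx).2
          exact_mod_cast Finset.card_image_le.trans (Finset.card_filter_le _ _)
      _ ≤ ∑ x ∈ (Finset.univ : Finset V), b :=
          Finset.sum_le_sum_of_subset_of_nonneg (Finset.filter_subset _ _) (fun _ _ _ => hb.le)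
      _ = Fintype.card V * b := by simp
  refine ⟨A ∪ B, by push_cast; exact Set.union_subset hA1 hBE, ?_, ?_, ?_⟩
  · have h1 : ((A ∪ B).card : ℝ) ≤ A.card + B.card := by exact_mod_cast Finset.card_union_le _ _
    rw [Finset.card_univ] at hA2
    linarith
  · intro L x y h
    exact (near_of_adj G (gr A) (2 * κ) hA3 L x y h).mono (gr_mono Finset.subset_union_left)
  · intro u v d hd huv
    obtain ⟨p, hp⟩ := huv
    rcases Nat.eq_zero_or_pos p.length with h0 | h0
    · have : u = v := SimpleGraph.Walk.eq_of_length_eq_zero h0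
      subst this
      exact ⟨∅, by simp, by simp; positivity, Near.refl _ _ _⟩
    have hadj : G.Adj u v := SimpleGraph.Walk.adj_of_length_eq_one (by omega : p.length = 1)
    by_cases hc : ((ball G 1 u).card : ℝ) ≤ b
    · refine ⟨∅, by simp, by simp; positivity, ?_⟩
      refine (Near.adj ?_).le (by omega)
      rw [gr, SimpleGraph.fromEdgeSet_adj]
      refine ⟨?_, hadj.ne⟩
      rw [Finset.mem_coe, Finset.mem_union, Finset.mem_union]
      refine Or.inl (Or.inr ?_)
      simp only [hB, Finset.mem_biUnion, Finset.mem_filter, Finset.mem_image]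
      exact ⟨u, ⟨Finset.mem_univ _, hc⟩, v, ⟨mem_ball.2 (Near.adj hadj), hadj⟩, rfl⟩
    · push Not at hc
      refine ⟨{s(u, v)}, by simpa using hadj, ?_, ?_⟩
      · rw [Finset.card_singleton, one_div, inv_mul_eq_div, le_div_iff₀ hb]
        simpa using hc.le
      · refine (Near.adj ?_).le (by omega)
        rw [gr, SimpleGraph.fromEdgeSet_adj]
        refine ⟨?_, hadj.ne⟩
        simp

theorem levels {V : Type} [Fintype V] (G : SimpleGraph V) (κ M k r : ℕ) (hκ : 1 ≤ κ) (hr : 1 ≤ r)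
    (N b : ℝ) (hN : 1 ≤ N) (hb : 1 ≤ b) (hn : (Fintype.card V : ℝ) ≤ N ^ κ)
    (hM : 4 * 3 ^ k * b ^ (2 ^ k) ≤ N ^ M) (Q : ℕ) (hQ : Q = 26 * κ * 3 ^ k) : ∀ i ≤ k,
    ∃ (A : Finset (Sym2 V)) (e : ℕ), (A : Set (Sym2 V)) ⊆ G.edgeSet ∧
      (A.card : ℝ) ≤ Fintype.card V * (b + N) + i * (Fintype.card V * (b * N * (4 * 3 ^ k) ^ 2)) ∧
      (∀ L x y, Near G L x y → Near (gr A) (2 * κ * L) x y) ∧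
      r * e + Q * r ^ i ≤ 2 ^ (M * i) * (Q * r ^ i) ∧
      Lvl G A (r ^ i) e ((2 * 3 ^ i - 1) * r ^ i) (2 ^ (M * (2 ^ i - 1)) / b ^ (2 ^ (i+1) - 1)) := by
  intro i
  induction i with
  | zero =>
    intro _
    obtain ⟨A, h1, h2, h3, h4⟩ := level_zero G κ hκ N b hN (by linarith) hn
    refine ⟨A, 0, h1, by simpa using h2, h3, by simp, by simpa using h4⟩
  | succ i ih =>
    intro hik
    obtain ⟨A, e, h1, h2, h3, h4, h5⟩ := ih (by omega)
    have hb0 : 0 < b := by linarith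
    have h3i : 1 ≤ 3 ^ i := Nat.one_le_pow _ _ (by norm_num)
    have h3k : 3 ^ (i+1) ≤ 3 ^ k := Nat.pow_le_pow_right (by norm_num) hik
    have h3k' : ((2 * 3 ^ i - 1 : ℕ) : ℝ) = 2 * 3 ^ i - 1 := by
      rw [Nat.cast_sub (by omega)]; push_cast; ring
    have h3k'' : (3 : ℝ) ^ (i+1) ≤ 3 ^ k := by exact_mod_cast h3k
    have hcr : (2 * ((2 * 3 ^ i - 1 : ℕ) : ℝ) + 1) ≤ 4 * 3 ^ k := by
      rw [h3k']
      rw [pow_succ] at h3k''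
      have : (0:ℝ) < 3 ^ i := by positivity
      linarith
    have hcr0 : (0:ℝ) ≤ (2 * ((2 * 3 ^ i - 1 : ℕ) : ℝ) + 1) := by positivity
    have h2i : 1 ≤ 2 ^ i := Nat.one_le_two_pow
    have hq0 : (0:ℝ) < 2 ^ (M * (2 ^ i - 1)) / b ^ (2 ^ (i+1) - 1) := by positivity
    obtain ⟨A', g1, g2, g3, g4⟩ := step G A h1 (r ^ i) e (2 * 3 ^ i - 1) (2 * κ) r M
      (Nat.one_le_pow _ _ hr) hr _ b N hq0 hb0 hN h3 h5 (by
        refine le_trans ?_ hM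
        rw [div_le_iff₀ hq0]
        have e1 : b ^ (2 ^ (i+1) - 1) * b = b ^ (2 ^ (i+1)) := by
          rw [← pow_succ]; congr 1; have : 1 ≤ 2 ^ (i+1) := Nat.one_le_two_pow
          omega
        have e2 : b ^ (2 ^ (i+1)) ≤ b ^ (2 ^ k) :=
          pow_le_pow_right₀ hb (Nat.pow_le_pow_right (by norm_num) hik)
        have e3 : (1:ℝ) ≤ 2 ^ (M * (2 ^ i - 1)) := one_le_pow₀ (by norm_num)
        rw [mul_div_assoc', le_div_iff₀ (by positivity)]
        calc (2 * ((2 * 3 ^ i - 1 : ℕ) : ℝ) + 1) * b * b ^ (2 ^ (i+1) - 1)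
            = (2 * ((2 * 3 ^ i - 1 : ℕ) : ℝ) + 1) * b ^ (2 ^ (i+1)) := by rw [← e1]; ring
          _ ≤ 4 * 3 ^ k * b ^ (2 ^ k) := by gcongr
          _ ≤ 4 * 3 ^ k * b ^ (2 ^ k) * 2 ^ (M * (2 ^ i - 1)) := le_mul_of_one_le_right (by positivity) e3)
    refine ⟨A', r * e + (2 ^ M - 1) * (r * e + 4 * (2 * κ * ((2 * 3 ^ i - 1) * r ^ i)) +
      4 * ((2 * 3 ^ i - 1) * r ^ i) + 2 * κ * r ^ i), g2, ?_, fun L x y h => (h3 L x y h).mono (gr_mono g1), ?_, ?_⟩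
    rotate_left 2
    · convert g4 using 1
      · rw [pow_succ]; ring
      · rw [pow_succ' r]
        congr 1
        rw [pow_succ]; omega
      · have e1 : M * (2 ^ (i+1) - 1) = M + M * (2 ^ i - 1) * 2 := by
          obtain ⟨P, hP⟩ : ∃ P, 2 ^ i = P + 1 := ⟨2 ^ i - 1, by omega⟩
          rw [pow_succ, hP, show (P + 1) * 2 - 1 = 2 * P + 1 by omega, Nat.add_sub_cancel]; ring
        have e2 : 2 ^ (i+1+1) - 1 = (2 ^ (i+1) - 1) * 2 + 1 := by
          have : 1 ≤ 2 ^ (i+1) := Nat.one_le_two_pow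
          rw [pow_succ]; omega
        rw [e1, e2, pow_add, pow_mul _ _ 2, pow_succ b, pow_mul b _ 2]
        field_simp
    · have : (Fintype.card V : ℝ) * (b * N * (2 * ((2 * 3 ^ i - 1 : ℕ) : ℝ) + 1) ^ 2) ≤
          Fintype.card V * (b * N * (4 * 3 ^ k) ^ 2) := by gcongr
      push_cast at this g3 ⊢
      linarith
    · set c := 2 * 3 ^ i - 1 with hc
      have hc' : c ≤ 2 * 3 ^ k := by rw [pow_succ] at h3k; omega
      have hQ' : 4 * (2 * κ * (c * r ^ i)) + 4 * (c * r ^ i) + 2 * κ * r ^ i ≤ Q * r ^ i := by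
        calc 4 * (2 * κ * (c * r ^ i)) + 4 * (c * r ^ i) + 2 * κ * r ^ i
            = (8 * κ * c + 4 * 1 * c + 2 * κ * 1) * r ^ i := by ring
          _ ≤ (8 * κ * (2 * 3 ^ k) + 4 * κ * (2 * 3 ^ k) + 2 * κ * 3 ^ k) * r ^ i := by
              have : 1 ≤ 3 ^ k := Nat.one_le_pow _ _ (by norm_num)
              gcongr
          _ = Q * r ^ i := by rw [hQ]; ring
      have hp : 1 ≤ 2 ^ M := Nat.one_le_two_pow
      obtain ⟨P, hP⟩ : ∃ P, 2 ^ M = P + 1 := ⟨2 ^ M - 1, by omega⟩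
      have e1 : 2 ^ (M * (i+1)) = (P + 1) * 2 ^ (M * i) := by rw [← hP, ← pow_add]; congr 1; ring
      have e2 : 2 ^ M - 1 = P := by omega
      rw [e1, e2, pow_succ]
      calc r * (r * e + P * (r * e + 4 * (2 * κ * (c * r ^ i)) + 4 * (c * r ^ i) + 2 * κ * r ^ i))
            + Q * (r ^ i * r)
          = r * (r * e + P * (r * e + (4 * (2 * κ * (c * r ^ i)) + 4 * (c * r ^ i) + 2 * κ * r ^ i)))
            + Q * (r ^ i * r) := by ring
        _ ≤ r * (r * e + P * (r * e + Q * r ^ i)) + Q * (r ^ i * r) := by gcongr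
        _ = r * (P + 1) * (r * e + Q * r ^ i) := by ring
        _ ≤ r * (P + 1) * (2 ^ (M * i) * (Q * r ^ i)) := by gcongr
        _ = _ := by ring

end SAS
namespace SAS

theorem scale {V : Type} [Fintype V] (G : SimpleGraph V) (M k r : ℕ) (hM1 : 1 ≤ M) (hr : 1 ≤ r)
    (hk : 1 ≤ k) (N b : ℝ) (hN : 1 ≤ N) (hb : 1 ≤ b) (hn : (Fintype.card V : ℝ) ≤ N ^ M)
    (hM : 4 * 3 ^ k * b ^ (2 ^ k) ≤ N ^ M)
    (hfin : 2 ^ (M * (2 ^ k - 1)) * (Fintype.card V : ℝ) < b ^ (2 ^ (k+1) - 1)) :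
    ∃ A : Finset (Sym2 V), (A : Set (Sym2 V)) ⊆ G.edgeSet ∧
      (A.card : ℝ) ≤ Fintype.card V * (b * N * (2 + k * (4 * 3 ^ k) ^ 2)) ∧
      ∀ u v d, d ≤ r ^ k → Near G d u v →
        Near (gr A) (d + 2 ^ (M * k) * (26 * M * 3 ^ k * r ^ (k - 1))) u v := by
  classical
  obtain ⟨A, e, h1, h2, h3, h4, h5⟩ := levels G M M k r hM1 hr N b hN hb hn hM _ rfl k le_rfl
  refine ⟨A, h1, h2.trans ?_, ?_⟩
  · have : b + N ≤ 2 * (b * N) := by nlinarith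
    have h : (Fintype.card V : ℝ) * (b + N) ≤ Fintype.card V * (2 * (b * N)) := by gcongr
    linarith
  · intro u v d hd huv
    obtain ⟨F, f1, f2, f3⟩ := h5 u v d hd huv
    have hF : F = ∅ := by
      rw [← Finset.card_eq_zero]
      have hc : ((ball G ((2 * 3 ^ k - 1) * r ^ k) u).card : ℝ) ≤ Fintype.card V := by
        exact_mod_cast Finset.card_le_univ _
      have hb0 : 0 < b ^ (2 ^ (k+1) - 1) := by positivity
      have : (F.card : ℝ) < 1 := by
        refine f2.trans_lt ?_
        calc _ ≤ 2 ^ (M * (2 ^ k - 1)) / b ^ (2 ^ (k+1) - 1) * (Fintype.card V : ℝ) := by gcongr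
          _ < 1 := by rw [div_mul_eq_mul_div, div_lt_one hb0]; exact hfin
      have : F.card < 1 := by exact_mod_cast this
      omega
    subst hF
    rw [Finset.union_empty] at f3
    refine f3.le ?_
    have : e ≤ 2 ^ (M * k) * (26 * M * 3 ^ k * r ^ (k - 1)) := by
      apply Nat.le_of_mul_le_mul_left _ (show 0 < r by omega)
      calc r * e ≤ 2 ^ (M * k) * (26 * M * 3 ^ k * r ^ k) := by omega
        _ = r * (2 ^ (M * k) * (26 * M * 3 ^ k * r ^ (k - 1))) := by
          obtain ⟨k', rfl⟩ : ∃ k', k = k' + 1 := ⟨k - 1, by omega⟩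
          simp only [Nat.add_sub_cancel]
          ring
    omega

theorem numerics (ε : ℝ) (hε : 0 < ε) (hε1 : ε < 1/2) (k M : ℕ) (hM : 2 / ε ≤ M) (x : ℝ)
    (hx : 16 * 9 ^ k ≤ x) (hx2 : 2 ^ (M * 2 ^ k) < x ^ ε) (b : ℝ)
    (hb : b = x ^ (1 / ((2:ℝ) ^ (k+1) - 1) + ε / 2 ^ k)) :
    1 ≤ x ^ ε ∧ 1 ≤ b ∧ x ≤ (x ^ ε) ^ M ∧ 4 * 3 ^ k * b ^ (2 ^ k) ≤ (x ^ ε) ^ M ∧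
      2 ^ (M * (2 ^ k - 1)) * x < b ^ (2 ^ (k+1) - 1) := by
  have h9 : (1:ℝ) ≤ 9 ^ k := one_le_pow₀ (by norm_num)
  have hx1 : 1 ≤ x := by linarith
  have hx0 : 0 < x := by linarith
  have h2k : (1:ℝ) ≤ 2 ^ k := one_le_pow₀ (by norm_num)
  have h2k1 : (2:ℝ) ^ k ≤ 2 ^ (k+1) - 1 := by rw [pow_succ]; linarith
  have hm0 : (0:ℝ) < 2 ^ (k+1) - 1 := by linarith
  have hNM : x ^ (2:ℝ) ≤ (x ^ ε) ^ M := by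
    rw [← Real.rpow_natCast (x ^ ε), ← Real.rpow_mul hx0.le]
    apply Real.rpow_le_rpow_of_exponent_le hx1
    rw [div_le_iff₀ hε] at hM
    linarith
  refine ⟨Real.one_le_rpow hx1 hε.le, ?_, ?_, ?_, ?_⟩
  · rw [hb]; apply Real.one_le_rpow hx1; positivity
  · refine le_trans ?_ hNM
    conv_lhs => rw [← Real.rpow_one x]
    exact Real.rpow_le_rpow_of_exponent_le hx1 (by norm_num)
  · refine le_trans ?_ hNM
    have e1 : b ^ (2 ^ k) ≤ x ^ (3/2 : ℝ) := by
      rw [hb, ← Real.rpow_natCast, ← Real.rpow_mul hx0.le]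
      apply Real.rpow_le_rpow_of_exponent_le hx1
      push_cast
      have : 1 / ((2:ℝ) ^ (k+1) - 1) * 2 ^ k ≤ 1 := by
        rw [div_mul_eq_mul_div, div_le_one hm0]; linarith
      have h' : ε / 2 ^ k * 2 ^ k = ε := by field_simp
      rw [add_mul, h']; linarith
    have e2 : (4 * 3 ^ k : ℝ) ≤ x ^ (1/2 : ℝ) := by
      rw [← Real.sqrt_eq_rpow]
      apply Real.le_sqrt_of_sq_le
      calc (4 * 3 ^ k : ℝ) ^ 2 = 16 * (3 ^ 2) ^ k := by rw [← pow_mul, mul_comm 2 k, pow_mul]; ring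
        _ ≤ x := by norm_num; exact hx
    calc 4 * 3 ^ k * b ^ (2 ^ k) ≤ x ^ (1/2 : ℝ) * x ^ (3/2 : ℝ) := by
          gcongr
          rw [hb]; positivity
      _ = x ^ (2:ℝ) := by rw [← Real.rpow_add hx0]; norm_num
  · have hc : ((2 ^ (k+1) - 1 : ℕ) : ℝ) = 2 ^ (k+1) - 1 := by
      rw [Nat.cast_sub Nat.one_le_two_pow]; push_cast; ring
    have e1 : x ^ (1 + ε) ≤ b ^ (2 ^ (k+1) - 1) := by
      rw [hb, ← Real.rpow_natCast, ← Real.rpow_mul hx0.le, hc]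
      apply Real.rpow_le_rpow_of_exponent_le hx1
      have h1 : 1 / ((2:ℝ) ^ (k+1) - 1) * (2 ^ (k+1) - 1) = 1 := by field_simp
      have h2 : ε ≤ ε / 2 ^ k * (2 ^ (k+1) - 1) := by
        rw [div_mul_eq_mul_div, le_div_iff₀ (by positivity)]
        gcongr
      rw [add_mul, h1]; linarith
    refine lt_of_lt_of_le ?_ e1
    rw [Real.rpow_add hx0, Real.rpow_one, mul_comm]
    apply mul_lt_mul_of_pos_left _ hx0
    refine lt_of_le_of_lt ?_ hx2
    apply pow_le_pow_right₀ (by norm_num)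
    apply Nat.mul_le_mul_left; exact Nat.sub_le _ _

theorem stretch_num (ε : ℝ) (hε : 0 < ε) (hε1 : ε < 1/2) (k M : ℕ) (hk : 1 ≤ k)
    (hM : (M:ℝ) ≤ 2 / ε + 1) :
    ((2 ^ (M * k) * (26 * M * 3 ^ k) * 2 ^ (k - 1) : ℕ) : ℝ) ≤ (2:ℝ) ^ (30 * (k:ℝ) / ε) := by
  have h1 : 2 ^ (M * k) * (26 * M * 3 ^ k) * 2 ^ (k - 1) ≤ 2 ^ (k * (2 * M + 7)) := by
    calc 2 ^ (M * k) * (26 * M * 3 ^ k) * 2 ^ (k - 1)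
        ≤ 2 ^ (M * k) * (2 ^ 5 * 2 ^ M * (2 ^ 2) ^ k) * 2 ^ (k - 1) := by
          have := (Nat.lt_two_pow_self (n := M)).le
          gcongr <;> norm_num
      _ = 2 ^ (M * k + (5 + M + 2 * k) + (k - 1)) := by
          rw [← pow_mul]; simp only [← pow_add]
      _ ≤ 2 ^ (k * (2 * M + 7)) := by
          apply Nat.pow_le_pow_right (by norm_num)
          obtain ⟨k', rfl⟩ : ∃ k', k = k' + 1 := ⟨k - 1, by omega⟩
          simp only [Nat.add_sub_cancel]
          nlinarith [Nat.zero_le (M * k'), Nat.zero_le k']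
  calc ((2 ^ (M * k) * (26 * M * 3 ^ k) * 2 ^ (k - 1) : ℕ) : ℝ) ≤ ((2 ^ (k * (2 * M + 7)) : ℕ) : ℝ) := by
        exact_mod_cast h1
    _ = (2:ℝ) ^ ((k * (2 * M + 7) : ℕ) : ℝ) := by rw [Real.rpow_natCast]; push_cast; rfl
    _ ≤ _ := by
        apply Real.rpow_le_rpow_of_exponent_le (by norm_num)
        push_cast
        have : (1:ℝ) ≤ 1 / ε := by rw [le_div_iff₀ hε]; linarith
        have e : 30 * (k:ℝ) / ε = k * (30 * (1 / ε)) := by ring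
        have e' : 2 / ε = 2 * (1 / ε) := by ring
        rw [e]
        rw [e'] at hM
        gcongr
        linarith

theorem scale_num (k d n : ℕ) (hk : 1 ≤ k) (hd : 1 ≤ d) (hdn : d < n) :
    ∃ j < Nat.log 2 n + 2, d ≤ (2 ^ j) ^ k ∧
      (((2 ^ j) ^ (k - 1) : ℕ) : ℝ) ≤ 2 ^ (k - 1) * (d:ℝ) ^ ((1:ℝ) - 1 / k) := by
  have hlast : d ≤ (2 ^ (Nat.log 2 n + 1)) ^ k := by
    have h1 := Nat.lt_pow_succ_log_self (b := 2) (by norm_num) n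
    have h2 : 2 ^ (Nat.log 2 n + 1) ≤ (2 ^ (Nat.log 2 n + 1)) ^ k :=
      Nat.le_self_pow (by omega) _
    simp only [Nat.succ_eq_add_one] at h1
    omega
  have hex : ∃ j, d ≤ (2 ^ j) ^ k := ⟨_, hlast⟩
  have hk0 : (0:ℝ) < k := by exact_mod_cast hk
  have hexp : (0:ℝ) ≤ 1 - 1 / k := by
    rw [sub_nonneg, div_le_one hk0]; exact_mod_cast hk
  have hdr : (1:ℝ) ≤ d := by exact_mod_cast hd
  refine ⟨Nat.find hex, by have := Nat.find_min' hex hlast; omega, Nat.find_spec hex, ?_⟩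
  rcases hj : Nat.find hex with _ | j
  · simp only [pow_zero, one_pow, Nat.cast_one]
    have h1 : (1:ℝ) ≤ 2 ^ (k - 1) := one_le_pow₀ (by norm_num)
    have h2 := Real.one_le_rpow hdr hexp
    nlinarith
  · have hlt := Nat.find_min hex (m := j) (by omega)
    push Not at hlt
    have h1 : (((2:ℝ) ^ j) ^ k) ^ ((1:ℝ) - 1 / k) ≤ (d:ℝ) ^ ((1:ℝ) - 1 / k) := by
      apply Real.rpow_le_rpow (by positivity) _ hexp
      exact_mod_cast hlt.le
    have h2 : (((2:ℝ) ^ j) ^ k) ^ ((1:ℝ) - 1 / k) = ((2:ℝ) ^ j) ^ (k - 1) := by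
      rw [← Real.rpow_natCast ((2:ℝ) ^ j) k, ← Real.rpow_mul (by positivity),
        ← Real.rpow_natCast _ (k - 1), Nat.cast_sub hk]
      congr 1
      push_cast
      field_simp
    rw [h2] at h1
    push_cast
    rw [pow_succ' 2 j, mul_pow]
    gcongr

theorem log_num (ε : ℝ) (hε : 0 < ε) (n : ℕ) (hn : 1 ≤ n) :
    ((Nat.log 2 n + 2 : ℕ) : ℝ) ≤ (2 / ε + 2) * (n:ℝ) ^ ε := by
  have hn' : (1:ℝ) ≤ n := by exact_mod_cast hn
  have h1 : ((Nat.log 2 n : ℕ) : ℝ) * Real.log 2 ≤ Real.log n := by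
    rw [← Real.log_pow]
    apply Real.log_le_log (by positivity)
    exact_mod_cast Nat.pow_log_le_self 2 (by omega)
  have h2 := Real.log_le_rpow_div (show (0:ℝ) ≤ n by positivity) hε
  have h3 := Real.log_two_gt_d9
  have h4 := Real.one_le_rpow hn' hε.le
  have h5 : (0:ℝ) ≤ (Nat.log 2 n : ℕ) := by positivity
  have e : (2 / ε + 2) * (n:ℝ) ^ ε = 2 * ((n:ℝ) ^ ε / ε) + 2 * (n:ℝ) ^ ε := by ring
  rw [e]
  push_cast
  nlinarith

theorem ncard_le {V : Type} [Fintype V] (G : SimpleGraph V) :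
    (G.edgeSet.ncard : ℝ) ≤ (Fintype.card V : ℝ) * Fintype.card V := by
  classical
  have h : G.edgeSet.ncard ≤ Fintype.card V * Fintype.card V := by
    rw [← Fintype.card_prod]
    have h1 : G.edgeSet ⊆ (fun z : V × V => s(z.1, z.2)) '' Set.univ := by
      intro z _
      induction z using Sym2.ind with
      | _ x y => exact ⟨(x, y), trivial, rfl⟩
    calc G.edgeSet.ncard ≤ _ := Set.ncard_le_ncard h1 (Set.toFinite _)
      _ ≤ _ := Set.ncard_image_le (Set.toFinite _)
      _ = _ := by rw [Set.ncard_univ, Nat.card_eq_fintype_card]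
  exact_mod_cast h

end SAS

/-- For every `ε > 0` and integer `k ≥ 1`, there is a constant `C` (depending
only on `ε` and `k`) such that every finite simple graph `G` on `n` vertices
has a subgraph `H ⊆ G` with at most `C · n^(1 + 10kε + 1/(2^(k+1) − 1))` edges,
such that for every pair of vertices connected in `G`,
`dist_H(u,v) ≤ dist_G(u,v) + 2^(30k/ε) · dist_G(u,v)^(1 − 1/k)`. -/
theorem sublinear_additive_spanner_eps (ε : ℝ) (hε : 0 < ε) (k : ℕ) (hk : 1 ≤ k) :
    ∃ C : ℝ, 0 < C ∧
      ∀ (V : Type) [Fintype V] (G : SimpleGraph V),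
        ∃ H : SimpleGraph V, H ≤ G ∧
          (H.edgeSet.ncard : ℝ) ≤
            C * (Fintype.card V : ℝ) ^
              ((1 : ℝ) + 10 * (k : ℝ) * ε + 1 / (2 ^ (k + 1) - 1)) ∧
          ∀ u v : V, G.Reachable u v →
            H.Reachable u v ∧
            (H.dist u v : ℝ) ≤ (G.dist u v : ℝ) +
              (2 : ℝ) ^ ((30 * (k : ℝ)) / ε) *
                (G.dist u v : ℝ) ^ ((1 : ℝ) - 1 / (k : ℝ)) := by
  have h2k : (1:ℝ) ≤ 2 ^ k := one_le_pow₀ (by norm_num)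
  have hm0 : (0:ℝ) < 2 ^ (k+1) - 1 := by rw [pow_succ]; linarith
  have hk1 : (1:ℝ) ≤ k := by exact_mod_cast hk
  set ν : ℝ := 1 / (2 ^ (k + 1) - 1) with hν
  have hν0 : 0 < ν := by positivity
  -- the trivial choice
  have htriv : ∀ (V : Type) [Fintype V] (G : SimpleGraph V) (u v : V), G.Reachable u v →
      G.Reachable u v ∧ (G.dist u v : ℝ) ≤ (G.dist u v : ℝ) +
        (2 : ℝ) ^ ((30 * (k : ℝ)) / ε) * (G.dist u v : ℝ) ^ ((1 : ℝ) - 1 / (k : ℝ)) := by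
    intro V _ G u v h
    refine ⟨h, ?_⟩
    have : 0 ≤ (2 : ℝ) ^ ((30 * (k : ℝ)) / ε) * (G.dist u v : ℝ) ^ ((1 : ℝ) - 1 / (k : ℝ)) := by
      positivity
    linarith
  by_cases hbig : 1 ≤ 10 * (k:ℝ) * ε
  · refine ⟨1, one_pos, fun V _ G => ⟨G, le_rfl, ?_, htriv V G⟩⟩
    refine (SAS.ncard_le G).trans ?_
    rw [one_mul]
    rcases Nat.eq_zero_or_pos (Fintype.card V) with h0 | h0
    · rw [h0]; simp; positivity
    · have hx1 : (1:ℝ) ≤ Fintype.card V := by exact_mod_cast h0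
      calc (Fintype.card V : ℝ) * Fintype.card V = (Fintype.card V : ℝ) ^ (2:ℝ) := by
            rw [Real.rpow_two]; ring
        _ ≤ _ := Real.rpow_le_rpow_of_exponent_le hx1 (by linarith)
  push Not at hbig
  have hε1 : ε < 1 / 2 := by nlinarith
  set M : ℕ := ⌈2 / ε⌉₊ with hMdef
  have hM1 : 2 / ε ≤ M := Nat.le_ceil _
  have hM2 : (M:ℝ) ≤ 2 / ε + 1 := (Nat.ceil_lt_add_one (by positivity)).le
  have hM3 : 1 ≤ M := Nat.one_le_ceil_iff.2 (by positivity)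
  obtain ⟨n0, hn0⟩ : ∃ n0 : ℕ, ∀ n : ℕ, n0 ≤ n → 16 * 9 ^ k ≤ (n:ℝ) ∧
      (2:ℝ) ^ (M * 2 ^ k) < (n:ℝ) ^ ε := by
    have t1 : Filter.Tendsto (fun n : ℕ => (n:ℝ) ^ ε) Filter.atTop Filter.atTop :=
      (tendsto_rpow_atTop hε).comp tendsto_natCast_atTop_atTop
    have t2 := (tendsto_natCast_atTop_atTop (R := ℝ)).eventually_ge_atTop (16 * 9 ^ k)
    have t3 := t1.eventually_gt_atTop ((2:ℝ) ^ (M * 2 ^ k))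
    exact Filter.eventually_atTop.1 (t2.and t3)
  set c0 : ℝ := (2 / ε + 2) * (2 + k * (4 * 3 ^ k) ^ 2) with hc0
  have hc00 : 0 < c0 := by positivity
  refine ⟨n0 + c0, by positivity, fun V _ G => ?_⟩
  by_cases hsmall : Fintype.card V < n0 ∨ Fintype.card V = 0
  · refine ⟨G, le_rfl, (SAS.ncard_le G).trans ?_, htriv V G⟩
    rcases Nat.eq_zero_or_pos (Fintype.card V) with h0 | h0
    · rw [h0]; simp; positivity
    · have hx1 : (1:ℝ) ≤ Fintype.card V := by exact_mod_cast h0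
      have hx2 : (Fintype.card V : ℝ) ≤ n0 + c0 := by
        have : (Fintype.card V : ℝ) ≤ n0 := by
          exact_mod_cast (hsmall.resolve_right (by omega)).le
        linarith
      have hx3 : (Fintype.card V : ℝ) ≤ (Fintype.card V : ℝ) ^ (1 + 10 * (k:ℝ) * ε + ν) := by
        conv_lhs => rw [← Real.rpow_one (Fintype.card V : ℝ)]
        apply Real.rpow_le_rpow_of_exponent_le hx1
        have : 0 < 10 * (k:ℝ) * ε := by positivity
        linarith
      exact mul_le_mul hx2 hx3 (by positivity) (by positivity)
  push Not at hsmall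
  obtain ⟨hx, hx2⟩ := hn0 _ hsmall.1
  have hn1 : 1 ≤ Fintype.card V := Nat.one_le_iff_ne_zero.2 hsmall.2
  set n := Fintype.card V with hn
  have hxn : (1:ℝ) ≤ n := by exact_mod_cast hn1
  have hxn0 : (0:ℝ) < n := by linarith
  obtain ⟨b, hb⟩ : ∃ b : ℝ, b = (n:ℝ) ^ (1 / ((2:ℝ) ^ (k+1) - 1) + ε / 2 ^ k) := ⟨_, rfl⟩
  obtain ⟨q1, q2, q3, q4, q5⟩ := SAS.numerics ε hε hε1 k M hM1 n hx hx2 b hb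
  have hsc := fun j : ℕ => SAS.scale G M k (2 ^ j) hM3 Nat.one_le_two_pow hk ((n:ℝ) ^ ε) b q1 q2 q3 q4 q5
  choose A hA1 hA2 hA3 using hsc
  classical
  set B := (Finset.range (Nat.log 2 n + 2)).biUnion A with hB
  have hBE : (B : Set (Sym2 V)) ⊆ G.edgeSet := by
    intro z hz
    rw [Finset.mem_coe, hB, Finset.mem_biUnion] at hz
    obtain ⟨j, _, hz⟩ := hz
    exact hA1 j hz
  refine ⟨SAS.gr B, SAS.gr_le hBE, ?_, ?_⟩
  · have h1 : ((SAS.gr B).edgeSet.ncard : ℝ) ≤ B.card := by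
      have : (SAS.gr B).edgeSet.ncard ≤ (B : Set (Sym2 V)).ncard := by
        apply Set.ncard_le_ncard _ (Set.toFinite _)
        rw [SAS.gr, SimpleGraph.edgeSet_fromEdgeSet]
        exact Set.sdiff_subset
      rw [Set.ncard_coe_finset] at this
      exact_mod_cast this
    have h2 : (B.card : ℝ) ≤ ((Nat.log 2 n + 2 : ℕ) : ℝ) *
        (n * (b * (n:ℝ) ^ ε * (2 + k * (4 * 3 ^ k) ^ 2))) := by
      calc (B.card : ℝ) ≤ ((∑ j ∈ Finset.range (Nat.log 2 n + 2), (A j).card : ℕ) : ℝ) := by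
            exact_mod_cast Finset.card_biUnion_le
        _ ≤ ∑ j ∈ Finset.range (Nat.log 2 n + 2),
            (n * (b * (n:ℝ) ^ ε * (2 + k * (4 * 3 ^ k) ^ 2))) := by
            push_cast
            exact Finset.sum_le_sum (fun j _ => hA2 j)
        _ = _ := by simp
    have h3 := SAS.log_num ε hε n hn1
    have hb0 : 0 < b := by linarith
    have h4 : (n:ℝ) ^ ε * (n * (b * (n:ℝ) ^ ε)) ≤ (n:ℝ) ^ (1 + 10 * (k:ℝ) * ε + ν) := by
      have e1 : (n:ℝ) ^ ε * (n * (b * (n:ℝ) ^ ε)) = (n:ℝ) ^ (ε + (1 + ((ν + ε / 2 ^ k) + ε))) := by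
        rw [Real.rpow_add hxn0, Real.rpow_add hxn0, Real.rpow_add hxn0 (ν + ε / 2 ^ k), Real.rpow_one,
          hb]
      rw [e1]
      apply Real.rpow_le_rpow_of_exponent_le hxn
      have : ε / 2 ^ k ≤ ε := div_le_self hε.le h2k
      nlinarith
    calc ((SAS.gr B).edgeSet.ncard : ℝ) ≤ ((Nat.log 2 n + 2 : ℕ) : ℝ) *
        (n * (b * (n:ℝ) ^ ε * (2 + k * (4 * 3 ^ k) ^ 2))) := h1.trans h2
      _ ≤ ((2 / ε + 2) * (n:ℝ) ^ ε) * (n * (b * (n:ℝ) ^ ε * (2 + k * (4 * 3 ^ k) ^ 2))) := by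
          gcongr
      _ = c0 * ((n:ℝ) ^ ε * (n * (b * (n:ℝ) ^ ε))) := by rw [hc0]; ring
      _ ≤ (n0 + c0) * (n:ℝ) ^ (1 + 10 * (k:ℝ) * ε + ν) := by
          apply mul_le_mul _ h4 (by positivity) (by positivity)
          have : (0:ℝ) ≤ n0 := by positivity
          linarith
  · intro u v huv
    rcases Nat.eq_zero_or_pos (G.dist u v) with h0 | h0
    · have : u = v := (huv.dist_eq_zero_iff).1 h0
      subst this
      refine ⟨SimpleGraph.Reachable.refl _, ?_⟩
      simp only [SimpleGraph.dist_self, Nat.cast_zero]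
      positivity
    obtain ⟨p, hp, hpl⟩ := huv.exists_path_of_dist
    have hlt : G.dist u v < n := by rw [← hpl]; exact hp.length_lt
    obtain ⟨j, hj, hdj, hjd⟩ := SAS.scale_num k (G.dist u v) n hk h0 hlt
    obtain ⟨w, hw⟩ := (hA3 j u v (G.dist u v) hdj ⟨p, hpl.le⟩).mono (SAS.gr_mono (B := B)
      (Finset.subset_biUnion_of_mem A (Finset.mem_range.2 hj)))
    refine ⟨w.reachable, ?_⟩
    have h1 : ((SAS.gr B).dist u v : ℝ) ≤
        ((G.dist u v + 2 ^ (M * k) * (26 * M * 3 ^ k * (2 ^ j) ^ (k - 1)) : ℕ) : ℝ) := by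
      exact_mod_cast (SimpleGraph.dist_le w).trans hw
    refine h1.trans ?_
    have h2 := SAS.stretch_num ε hε hε1 k M hk hM2
    have h3 : (0:ℝ) ≤ (G.dist u v : ℝ) ^ ((1 : ℝ) - 1 / (k : ℝ)) := by positivity
    rw [Nat.cast_add]
    apply add_le_add le_rfl
    calc ((2 ^ (M * k) * (26 * M * 3 ^ k * (2 ^ j) ^ (k - 1)) : ℕ) : ℝ)
        = ((2 ^ (M * k) * (26 * M * 3 ^ k) : ℕ) : ℝ) * (((2 ^ j) ^ (k - 1) : ℕ) : ℝ) := by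
          push_cast; ring
      _ ≤ ((2 ^ (M * k) * (26 * M * 3 ^ k) : ℕ) : ℝ) *
          (2 ^ (k - 1) * (G.dist u v : ℝ) ^ ((1:ℝ) - 1 / k)) := by gcongr
      _ = ((2 ^ (M * k) * (26 * M * 3 ^ k) * 2 ^ (k - 1) : ℕ) : ℝ) *
          (G.dist u v : ℝ) ^ ((1:ℝ) - 1 / k) := by push_cast; ring
      _ ≤ _ := by gcongr
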